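/- For every n ≥ 1, the number of connected Kreweras words of length 3n equals 2^{n+1}·(4n−3)!/((3n−1)!·n!); equivalently, this number multiplied by (3n−1)!·n! equals 2^{n+1}·(4n−3)!. -/

import Mathlib

/-- The three letters of a Kreweras word. -/
inductive KLetter : Type
  | A | B | C
deriving DecidableEq, Repr

open KLetter

/-- `w` is a Kreweras word of length `3 * n`: it has `n` `A`'s, `n` `B`'s, `n` `C`'s,
and every prefix has at least as many `A`'s as `B`'s and at least as many `A`'s as `C`'s. -/
def IsKrewerasWord (n : ℕ) (w : List KLetter) : Prop :=
  w.length = 3 * n ∧ w.count A = n ∧ w.count B = n ∧ w.count C = n ∧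
  ∀ k : ℕ, (w.take k).count B ≤ (w.take k).count A ∧
           (w.take k).count C ≤ (w.take k).count A

/-- `kiota w` is the smallest index `ι ≥ 1` (1-indexed) such that the prefix of
length `ι` of `w` has equally many `A`'s as `B`'s, or equally many `A`'s as `C`'s
(and `0` if no such index exists). -/
def kiota (w : List KLetter) : ℕ :=
  (((List.range (w.length + 1)).filter fun k =>
      decide (1 ≤ k) &&
      (((w.take k).count A == (w.take k).count B) ||
       ((w.take k).count A == (w.take k).count C))).headD 0)

/-- Promotion of a Kreweras word:
`pro w = (w₂, …, w_{ι-1}, A, w_{ι+1}, …, w_{3n}, w_ι)` where `ι = kiota w`. -/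
def pro (w : List KLetter) : List KLetter :=
  ((w.drop 1).set (kiota w - 2) A) ++ [w.getD (kiota w - 1) A]

/-- The trip permutation `σ_w` of a Kreweras word of length `3 * n`, as a function on
1-indexed positions: `σ_w i` is the unique element of `{1, …, 3n}` congruent to
`kiota (pro^[i-1] w) + i - 1` modulo `3 * n`. -/
def ksigma (n : ℕ) (w : List KLetter) (i : ℕ) : ℕ :=
  (kiota (pro^[i - 1] w) + i - 2) % (3 * n) + 1

/-- `keps w i` is the letter of `pro^[i-1] w` in (1-indexed) position `kiota (pro^[i-1] w)`. -/
def keps (w : List KLetter) (i : ℕ) : KLetter :=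
  (pro^[i - 1] w).getD (kiota (pro^[i - 1] w) - 1) A

/-- The negation swapping `B` and `C` (and fixing `A`). -/
def negL : KLetter → KLetter
  | A => A
  | B => C
  | C => B

open Classical in
/-- The involution `τ_i` on Kreweras words of length `3 * n`: swap the letters in
(1-indexed) positions `i` and `i + 1` if the result is again a Kreweras word,
and otherwise do nothing. -/
noncomputable def tau (n i : ℕ) (w : List KLetter) : List KLetter :=
  let w' := (w.set (i - 1) (w.getD i A)).set i (w.getD (i - 1) A)
  if IsKrewerasWord n w' then w' else w

/-- `tauDown n j = τ_j ∘ τ_{j-1} ∘ ⋯ ∘ τ_1`. -/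
noncomputable def tauDown (n : ℕ) : ℕ → List KLetter → List KLetter
  | 0, w => w
  | j + 1, w => tau n (j + 1) (tauDown n j w)

/-- `evacAux n j = (tauDown n 1) ∘ (tauDown n 2) ∘ ⋯ ∘ (tauDown n j)`. -/
noncomputable def evacAux (n : ℕ) : ℕ → List KLetter → List KLetter
  | 0, w => w
  | j + 1, w => evacAux n j (tauDown n (j + 1) w)

/-- Evacuation on Kreweras words of length `3 * n`:
`evac = (τ_1) ∘ (τ_2 ∘ τ_1) ∘ ⋯ ∘ (τ_{3n-1} ∘ ⋯ ∘ τ_2 ∘ τ_1)`. -/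
noncomputable def evac (n : ℕ) (w : List KLetter) : List KLetter :=
  evacAux n (3 * n - 1) w

/-- `tauAsc n k c = τ_{k+c-1} ∘ ⋯ ∘ τ_{k+1} ∘ τ_k`. -/
noncomputable def tauAsc (n k : ℕ) : ℕ → List KLetter → List KLetter
  | 0, w => w
  | j + 1, w => tau n (k + j) (tauAsc n k j w)

/-- `evacStarAux n j = (tauAsc n 1 (3n-1)) ∘ (tauAsc n 2 (3n-2)) ∘ ⋯ ∘ (tauAsc n j (3n-j))`. -/
noncomputable def evacStarAux (n : ℕ) : ℕ → List KLetter → List KLetter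
  | 0, w => w
  | j + 1, w => evacStarAux n j (tauAsc n (j + 1) (3 * n - (j + 1)) w)

/-- Dual evacuation on Kreweras words of length `3 * n`:
`evac* = (τ_{3n-1} ∘ ⋯ ∘ τ_1) ∘ (τ_{3n-1} ∘ ⋯ ∘ τ_2) ∘ ⋯ ∘ (τ_{3n-1})`. -/
noncomputable def evacStar (n : ℕ) (w : List KLetter) : List KLetter :=
  evacStarAux n (3 * n - 1) w

/-- The three-element "V"-shaped poset: `a < b`, `a < c`, with `b`, `c` incomparable. -/
inductive VP : Type
  | a | b | c
deriving DecidableEq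

instance : PartialOrder VP where
  le x y := x = y ∨ x = VP.a
  le_refl x := Or.inl rfl
  le_trans x y z hxy hyz := by
    rcases hxy with rfl | rfl
    · exact hyz
    · exact Or.inr rfl
  le_antisymm x y hxy hyx := by
    rcases hxy with rfl | rfl
    · rfl
    · rcases hyx with rfl | rfl <;> rfl

/-- The labeling of elements of `V(n) = VP × Fin n` by letters. -/
def vlabel {n : ℕ} (p : VP × Fin n) : KLetter :=
  match p.1 with
  | VP.a => A
  | VP.b => B
  | VP.c => C

/-- `L` is a linear extension of `V(n) = VP × Fin n` (with the product order):
a list of all elements of `V(n)`, each appearing once, such that `L_i ≤ L_j`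
implies `i ≤ j`. -/
def IsLinearExtension (n : ℕ) (L : List (VP × Fin n)) : Prop :=
  L.Nodup ∧ (∀ p : VP × Fin n, p ∈ L) ∧
  ∀ i j : Fin L.length, L.get i ≤ L.get j → (i : ℕ) ≤ (j : ℕ)

/-- A connected Kreweras word: a Kreweras word of length `3 * n` having no proper
nonempty consecutive substring which is itself a Kreweras word. -/
def ConnectedKrewerasWord (n : ℕ) (w : List KLetter) : Prop :=
  IsKrewerasWord n w ∧
  ∀ (u : List KLetter) (m : ℕ), u <:+: w → u ≠ [] → u ≠ w → ¬ IsKrewerasWord m u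

/-!
Give the letters of a word weights `α`, `β`, `γ` with `α + β + γ = 1`. Appending a letter to a
word all of whose prefixes have at least as many `A`'s as `B`'s and as `C`'s leaves this class only
on the boundary, so the weights of the words of length `n` telescope, and their generating function
`R` on the boundary `#A = #C` satisfies `β R(αβ, αβγ) + γ R(αγ, αβγ) = 1`. For a rational choice of
the weights this equation has a unique solution, which is explicit; in particular the generating
function `K` of Kreweras words satisfies `K(u / (1 + 4u)³) = (1 + 4u)(1 - 2u)`.

Every nonempty Kreweras word arises from exactly one connected word by inserting a Kreweras word
after each of its letters, so `K(y) = 1 + C(y K(y)³)` for the generating function `C` of connected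
words. Hence `C(u (1 - 2u)³) = 2u - 8u²`, and Lagrange inversion gives the coefficients of `C`.
-/

namespace Kreweras

section MvPowerSeries
open MvPowerSeries

variable {σ τ ι R : Type*} [CommRing R]

theorem le_order_subst_sub_sum [Finite σ] [DecidableEq σ] {a : σ → MvPowerSeries τ R}
    (ha : ∀ j, constantCoeff (a j) = 0) (F : MvPowerSeries σ R) (T : Finset ι) (s : ι → σ →₀ ℕ)
    {N : ℕ} (hF : ∀ d : σ →₀ ℕ, d.degree < N → coeff d F = ({i ∈ T | s i = d}.card : R)) :
    (N : ℕ∞) ≤ order (subst a F - ∑ i ∈ T, (s i).prod fun j k => a j ^ k) := by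
  have hs := hasSubst_of_constantCoeff_zero ha
  have hsum : ∑ i ∈ T, (s i).prod (fun j k => a j ^ k)
      = subst a (∑ i ∈ T, monomial (s i) (1 : R)) := by
    rw [← substAlgHom_apply hs, map_sum]
    simp [substAlgHom_apply, subst_monomial hs]
  have horder : (N : ℕ∞) ≤ order (F - ∑ i ∈ T, monomial (s i) (1 : R)) := by
    refine nat_le_order fun d hd => ?_
    simp [coeff_monomial, hF d hd, eq_comm]
  have ha' (j : σ) : 1 ≤ order (a j) := one_le_order_iff_constCoeff_eq_zero.mpr (ha j)
  rw [hsum, ← subst_sub hs]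
  refine horder.trans (le_trans ?_ (le_order_subst hs _))
  exact le_mul_of_one_le_left' (le_iInf ha')

theorem subst_zero_of_hasSubst {a : σ → MvPowerSeries τ R} (ha : HasSubst a) :
    subst a (0 : MvPowerSeries σ R) = 0 := by
  rw [← substAlgHom_apply ha, map_zero]

theorem hasSubst_pair {a b : MvPowerSeries τ R} (ha : constantCoeff a = 0)
    (hb : constantCoeff b = 0) : HasSubst ![a, b] :=
  hasSubst_of_constantCoeff_zero (Fin.forall_fin_two.mpr ⟨ha, hb⟩)

theorem subst_subst_pair {c : σ → MvPowerSeries τ R} (hc : HasSubst c) {a b : MvPowerSeries σ R}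
    (ha : constantCoeff a = 0) (hb : constantCoeff b = 0) (F : MvPowerSeries (Fin 2) R) :
    subst c (subst ![a, b] F) = subst ![subst c a, subst c b] F := by
  rw [subst_comp_subst_apply (hasSubst_pair ha hb) hc]
  congr 1
  ext j : 1
  fin_cases j <;> rfl

theorem coeff_subst_zero_X (F : MvPowerSeries (Fin 2) R) (n : ℕ) :
    PowerSeries.coeff n (subst ![0, PowerSeries.X] F) = coeff (Finsupp.single 1 n) F := by
  have hX : constantCoeff (PowerSeries.X : PowerSeries R) = 0 := PowerSeries.constantCoeff_X
  have hs : HasSubst ![0, PowerSeries.X] := hasSubst_pair (map_zero _) hX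
  rw [PowerSeries.coeff, coeff_subst hs, finsum_eq_single _ (Finsupp.single 1 n)]
  · simp [← PowerSeries.coeff_def rfl]
  · intro d hd
    rw [Finsupp.prod_fintype _ _ fun _ => pow_zero _, Fin.prod_univ_two]
    by_cases h0 : d 0 = 0
    · have h1 : n ≠ d 1 := by
        rintro rfl
        refine hd ?_
        ext j
        fin_cases j <;> simp [h0]
      simp [h0, ← PowerSeries.coeff_def rfl, PowerSeries.coeff_X_pow, h1]
    · simp [h0]

theorem X_one_dvd_of_subst_eq_zero {F : MvPowerSeries (Fin 2) R}
    (hF : subst ![X 0, (0 : MvPowerSeries (Fin 2) R)] F = 0) : X 1 ∣ F := by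
  rw [X_dvd_iff]
  intro d hd
  have hs : HasSubst ![X 0, (0 : MvPowerSeries (Fin 2) R)] := HasSubst.X_zero
  have hdF := congrArg (coeff d) hF
  rw [coeff_subst hs, finsum_eq_single _ d] at hdF
  · have hd' : d = Finsupp.single 0 (d 0) := by
      ext j
      fin_cases j <;> simp [hd]
    rw [hd'] at hdF ⊢
    simpa [coeff_X_pow] using hdF
  · intro e he
    rw [Finsupp.prod_fintype _ _ fun _ => pow_zero _, Fin.prod_univ_two]
    by_cases h1 : e 1 = 0
    · have h0 : d ≠ Finsupp.single 0 (e 0) := by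
        rintro rfl
        refine he ?_
        ext j
        fin_cases j <;> simp [h1]
      simp [h1, coeff_X_pow, h0]
    · simp [h1]

theorem eq_zero_of_functional_equation [IsDomain R] {a b c s : MvPowerSeries (Fin 2) R}
    (hb : b ≠ 0) (hs : constantCoeff s = 0)
    (ha : subst ![X 0, (0 : MvPowerSeries (Fin 2) R)] a ≠ 0) {F : MvPowerSeries (Fin 2) R}
    (hF : a * subst ![X 0, X 1 * b] F + X 1 * (c * subst ![s, X 1 * b] F) = 0) : F = 0 := by
  have h0 : HasSubst ![X 0, (0 : MvPowerSeries (Fin 2) R)] := HasSubst.X_zero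
  have hXb : constantCoeff (X 1 * b) = 0 := by simp
  have hX0 : constantCoeff (X 0 : MvPowerSeries (Fin 2) R) = 0 := constantCoeff_X 0
  have hXpow (m : ℕ) : X 1 ^ m ∣ F := by
    induction m generalizing F with
    | zero => simp
    | succ m ih =>
      have hF0 : subst ![X 0, (0 : MvPowerSeries (Fin 2) R)] F = 0 := by
        have := congrArg (subst ![X 0, (0 : MvPowerSeries (Fin 2) R)]) hF
        rw [subst_add h0, subst_mul h0, subst_mul h0, subst_subst_pair h0 hX0 hXb,
          subst_mul h0, subst_X h0, subst_X h0] at this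
        simpa [ha, subst_zero_of_hasSubst h0] using this
      obtain ⟨G, rfl⟩ := X_one_dvd_of_subst_eq_zero hF0
      have hG : a * subst ![X 0, X 1 * b] G + X 1 * (c * subst ![s, X 1 * b] G) = 0 := by
        rw [subst_mul (hasSubst_pair hX0 hXb), subst_mul (hasSubst_pair hs hXb),
          subst_X (hasSubst_pair hX0 hXb), subst_X (hasSubst_pair hs hXb)] at hF
        have hX1 : X 1 * b ≠ 0 :=
          mul_ne_zero (fun h => by simpa using congrArg (coeff (Finsupp.single 1 1)) h) hb
        refine (mul_eq_zero.mp ?_).resolve_left hX1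
        simp only [Matrix.cons_val_one, Matrix.cons_val_fin_one] at hF
        linear_combination hF
      obtain ⟨H, hH⟩ := ih hG
      exact ⟨H, by rw [hH]; ring⟩
  ext d
  exact X_pow_dvd_iff.mp (hXpow (d 1 + 1)) d (Nat.lt_succ_self _)

end MvPowerSeries

section LagrangeInversion
open PowerSeries

variable {R : Type*} [CommRing R]

theorem coeff_succ_X_mul_derivative_mul_pow [IsAddTorsionFree R] (f : PowerSeries R) (n : ℕ) :
    coeff (n + 1) (X * (d⁄dX R f * f ^ n)) = coeff (n + 1) (f ^ (n + 1)) := by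
  have h := congrArg (coeff n) (derivative_pow f (n + 1))
  rw [coeff_derivative, Nat.add_sub_cancel, mul_assoc, ← nsmul_eq_mul, map_nsmul] at h
  rw [coeff_succ_X_mul, mul_comm (d⁄dX R f)]
  refine nsmul_right_injective n.succ_ne_zero ?_
  simp only [Nat.succ_eq_add_one, ← h, nsmul_eq_mul]
  push_cast
  ring

theorem coeff_derivative_X_mul_mul_pow [IsAddTorsionFree R] {φ ψ : PowerSeries R}
    (h : φ * ψ = 1) (n : ℕ) :
    coeff n (d⁄dX R (X * φ) * ψ ^ (n + 1)) = if n = 0 then 1 else 0 := by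
  have hφ : d⁄dX R φ * ψ + φ * d⁄dX R ψ = 0 := by
    have := congrArg (d⁄dX R) h
    rw [Derivation.leibniz, derivative_one] at this
    simpa [mul_comm, add_comm] using this
  rw [Derivation.leibniz, derivative_X, smul_eq_mul, smul_eq_mul]
  rcases n with _ | n
  · have : constantCoeff φ * constantCoeff ψ = 1 := by rw [← map_mul, h, map_one]
    simpa using this
  · have : (X * d⁄dX R φ + φ * 1) * ψ ^ (n + 2) = ψ ^ (n + 1) - X * (d⁄dX R ψ * ψ ^ n) := by
      linear_combination X * ψ ^ (n + 1) * hφ + (ψ ^ (n + 1) - X * ψ ^ n * d⁄dX R ψ) * h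
    rw [this, map_sub, coeff_succ_X_mul_derivative_mul_pow, sub_self, if_neg n.succ_ne_zero]

theorem coeff_subst_mul_derivative_mul_pow [IsAddTorsionFree R] {φ ψ : PowerSeries R}
    (h : φ * ψ = 1) (g : PowerSeries R) (n : ℕ) :
    coeff n (g.subst (X * φ) * d⁄dX R (X * φ) * ψ ^ (n + 1)) = coeff n g := by
  have hs : HasSubst (X * φ) := .of_constantCoeff_zero' (by simp)
  have hsubst (g : PowerSeries R) : g.subst (X * φ)
      = X * φ * (mk fun i => coeff (i + 1) g).subst (X * φ) + C (constantCoeff g) := by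
    conv_lhs => rw [eq_X_mul_shift_add_const g]
    rw [subst_add hs, subst_mul hs, subst_X hs, subst_C]
    rfl
  have hconst (r : R) (k : ℕ) : coeff k (C r * d⁄dX R (X * φ) * ψ ^ (k + 1))
      = if k = 0 then r else 0 := by
    rw [mul_assoc, coeff_C_mul, coeff_derivative_X_mul_mul_pow h, mul_ite, mul_one, mul_zero]
  induction n generalizing g with
  | zero =>
    rw [hsubst, add_mul, add_mul, map_add, hconst]
    simp
  | succ n ih =>
    have hshift : X * φ * (mk fun i => coeff (i + 1) g).subst (X * φ) * d⁄dX R (X * φ)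
          * ψ ^ (n + 2)
        = X * ((mk fun i => coeff (i + 1) g).subst (X * φ) * d⁄dX R (X * φ) * ψ ^ (n + 1)) := by
      linear_combination X * (mk fun i => coeff (i + 1) g).subst (X * φ) * d⁄dX R (X * φ)
        * ψ ^ (n + 1) * h
    rw [hsubst, add_mul, add_mul, map_add, hconst, hshift, coeff_succ_X_mul, ih, coeff_mk,
      if_neg n.succ_ne_zero, add_zero]

/-- Lagrange inversion. -/
theorem succ_mul_coeff_eq_of_subst_eq [IsAddTorsionFree R] {φ ψ c q : PowerSeries R}
    (h : φ * ψ = 1) (hc : c.subst (X * φ) = q) (n : ℕ) :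
    (n + 1) * coeff (n + 1) c = coeff n (d⁄dX R q * ψ ^ (n + 1)) := by
  have hs : HasSubst (X * φ) := .of_constantCoeff_zero' (by simp)
  rw [← hc, derivative_subst hs, coeff_subst_mul_derivative_mul_pow h, coeff_derivative, mul_comm]

theorem coeff_pow_of_one_sub_mul_eq_one {a : R} {ψ : PowerSeries R}
    (h : (1 - C a * X) * ψ = 1) (d n : ℕ) :
    coeff n (ψ ^ (d + 1)) = (n + d).choose d * a ^ n := by
  have hmk := congrArg (rescale a) (mk_add_choose_mul_one_sub_pow_eq_one R d)
  rw [map_mul, map_pow, map_sub, map_one, rescale_X, rescale_mk] at hmk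
  have hψ : (1 - C a * X) ^ (d + 1) * ψ ^ (d + 1) = 1 := by rw [← mul_pow, h, one_pow]
  rw [← left_inv_eq_right_inv hmk hψ, coeff_mk, mul_comm, add_comm d]
end LagrangeInversion

section CountSeries
open PowerSeries Finset.HasAntidiagonal

variable {ι κ R : Type*}

/-- The ordinary generating function `∑ i, X ^ size i` of a combinatorial class `ι`. -/
noncomputable def countSeries (R : Type*) [Semiring R] (size : ι → ℕ) : PowerSeries R :=
  mk fun n => (Nat.card {i // size i = n} : R)

theorem coeff_countSeries [Semiring R] (size : ι → ℕ) (n : ℕ) :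
    coeff n (countSeries R size) = Nat.card {i // size i = n} :=
  coeff_mk _ _

theorem countSeries_congr [Semiring R] {size : ι → ℕ} {size' : κ → ℕ} (e : ι ≃ κ)
    (he : ∀ i, size' (e i) = size i) : countSeries R size = countSeries R size' := by
  ext n
  have e' : {i // size i = n} ≃ {j // size' j = n} := e.subtypeEquiv fun i => by rw [he]
  rw [coeff_countSeries, coeff_countSeries, Nat.card_congr e']

theorem coeff_countSeries_subtype [Semiring R] (P : ι → Prop) (size : ι → ℕ) (n : ℕ) :
    coeff n (countSeries R fun i : {i // P i} => size i) = Nat.card {i // P i ∧ size i = n} := by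
  rw [coeff_countSeries,
    Nat.card_congr (Equiv.subtypeSubtypeEquivSubtypeInter P fun i => size i = n)]

/-- The pairs `(i, j)` of total size `n` in the class of all pairs with `P (size i) j`, sorted by
the sizes of the two components. -/
def fiberAddEquiv (f : ι → ℕ) (g : κ → ℕ) (P : ℕ → κ → Prop) (n : ℕ) :
    {x : {x : ι × κ // P (f x.1) x.2} // f x.1.1 + g x.1.2 = n} ≃
      Σ p : antidiagonal n, {i // f i = p.1.1} × {j : {j // P p.1.1 j} // g j = p.1.2} where
  toFun x := ⟨⟨(f x.1.1.1, g x.1.1.2), mem_antidiagonal.mpr x.2⟩, ⟨x.1.1.1, rfl⟩,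
    ⟨⟨x.1.1.2, x.1.2⟩, rfl⟩⟩
  invFun y := ⟨⟨(y.2.1, y.2.2), y.2.1.2.symm ▸ y.2.2.1.2⟩,
    (congrArg₂ _ y.2.1.2 y.2.2.2).trans (mem_antidiagonal.mp y.1.2)⟩
  left_inv _ := rfl
  right_inv := by
    rintro ⟨⟨⟨a, b⟩, hp⟩, ⟨i, rfl : f i = a⟩, ⟨⟨j, hj⟩, rfl : g j = b⟩⟩
    rfl

theorem finite_fiber_add {f : ι → ℕ} {g : κ → ℕ} {P : ℕ → κ → Prop}
    (_ : ∀ n, Finite {i // f i = n}) (_ : ∀ m n, Finite {j : {j // P m j} // g j = n}) (n : ℕ) :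
    Finite {x : {x : ι × κ // P (f x.1) x.2} // f x.1.1 + g x.1.2 = n} :=
  Finite.of_equiv _ (fiberAddEquiv f g P n).symm

theorem coeff_countSeries_add [Semiring R] {f : ι → ℕ} {g : κ → ℕ} {P : ℕ → κ → Prop}
    (hf : ∀ n, Finite {i // f i = n}) (hg : ∀ m n, Finite {j : {j // P m j} // g j = n}) (n : ℕ) :
    coeff n (countSeries R fun x : {x : ι × κ // P (f x.1) x.2} => f x.1.1 + g x.1.2)
      = ∑ p ∈ antidiagonal n, coeff p.1 (countSeries R f) *
          coeff p.2 (countSeries R fun j : {j // P p.1 j} => g j) := by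
  rw [coeff_countSeries, Nat.card_congr (fiberAddEquiv f g P n), Nat.card_sigma,
    ← Finset.sum_coe_sort (antidiagonal n)]
  simp [coeff_countSeries, Nat.card_prod]

/-- Splitting off the first entry of a list of length `k + 1`. -/
def listConsEquiv (ι : Type*) (k : ℕ) :
    {x : ι × List ι // x.2.length = k} ≃ {l : List ι // l.length = k + 1} where
  toFun x := ⟨x.1.1 :: x.1.2, congrArg Nat.succ x.2⟩
  invFun
    | ⟨i :: l, h⟩ => ⟨(i, l), Nat.succ_injective h⟩
  left_inv _ := rfl
  right_inv
    | ⟨_ :: _, _⟩ => rfl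

theorem sum_map_listConsEquiv (size : ι → ℕ) (k : ℕ) (x : {x : ι × List ι // x.2.length = k}) :
    ((listConsEquiv ι k x).1.map size).sum = size x.1.1 + (x.1.2.map size).sum := by
  simp [listConsEquiv]

theorem finite_list_fiber {size : ι → ℕ} (h : ∀ n, Finite {i // size i = n}) (k n : ℕ) :
    Finite {l : {l : List ι // l.length = k} // (l.1.map size).sum = n} := by
  induction k generalizing n with
  | zero =>
    have : Subsingleton {l : List ι // l.length = 0} :=
      ⟨fun l l' => Subtype.ext ((List.length_eq_zero_iff.mp l.2).trans
        (List.length_eq_zero_iff.mp l'.2).symm)⟩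
    infer_instance
  | succ k ih =>
    have hfin := finite_fiber_add (g := fun l : List ι => (l.map size).sum)
      (P := fun _ l => l.length = k) h (fun _ => ih) n
    exact Finite.of_equiv _ ((listConsEquiv ι k).subtypeEquiv
      (q := fun l => (l.1.map size).sum = n) fun x => by rw [sum_map_listConsEquiv])

theorem countSeries_list [Semiring R] {size : ι → ℕ} (h : ∀ n, Finite {i // size i = n})
    (k : ℕ) :
    countSeries R (fun l : {l : List ι // l.length = k} => (l.1.map size).sum)
      = countSeries R size ^ k := by
  induction k with
  | zero =>
    ext n
    have e : {l : {l : List ι // l.length = 0} // (l.1.map size).sum = n} ≃ {_u : Unit // 0 = n} :=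
      { toFun l := ⟨(), by simpa [List.length_eq_zero_iff.mp l.1.2] using l.2⟩
        invFun u := ⟨⟨[], rfl⟩, u.2⟩
        left_inv l := Subtype.ext (Subtype.ext (List.length_eq_zero_iff.mp l.1.2).symm)
        right_inv _ := rfl }
    rw [coeff_countSeries, Nat.card_congr e, pow_zero, coeff_one]
    split_ifs with hn <;> simp [hn, eq_comm]
  | succ k ih =>
    ext n
    rw [← countSeries_congr (listConsEquiv ι k) (sum_map_listConsEquiv size k),
      coeff_countSeries_add (P := fun _ l => l.length = k)
        (g := fun l : List ι => (l.map size).sum) h (fun _ => finite_list_fiber h k),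
      pow_succ', coeff_mul, ih]

theorem countSeries_comp [CommRing R] {f : ι → ℕ} {g : κ → ℕ} (hf : ∀ n, Finite {i // f i = n})
    (hg : ∀ n, Finite {j // g j = n}) (r : ℕ) :
    countSeries R (fun x : {x : ι × List κ // x.2.length = r * f x.1} =>
        f x.1.1 + (x.1.2.map g).sum)
      = (countSeries R f).subst (X * countSeries R g ^ r) := by
  ext n
  have hs : HasSubst (X * countSeries R g ^ r) := .of_constantCoeff_zero' (by simp)
  have hpow (d : ℕ) : coeff n ((X * countSeries R g ^ r) ^ d)
      = if d ≤ n then coeff (n - d) (countSeries R g ^ (r * d)) else 0 := by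
    rw [mul_pow, ← pow_mul, coeff_X_pow_mul']
  rw [coeff_countSeries_add (P := fun m l => l.length = r * m)
      (g := fun l : List κ => (l.map g).sum) hf (fun _ => finite_list_fiber hg _),
    coeff_subst' hs, finsum_eq_sum_of_support_subset (s := Finset.range (n + 1)),
    Finset.Nat.sum_antidiagonal_eq_sum_range_succ_mk]
  · refine Finset.sum_congr rfl fun d hd => ?_
    rw [countSeries_list hg, hpow, if_pos (Nat.lt_succ_iff.mp (Finset.mem_range.mp hd)),
      smul_eq_mul]
  · intro d hd
    rw [Finset.coe_range, Set.mem_Iio, Nat.lt_succ_iff]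
    by_contra hdn
    exact hd (smul_eq_zero_of_right _ (by rw [hpow, if_neg hdn]))

end CountSeries

section BallotWords
open MvPowerSeries

instance : Fintype KLetter :=
  ⟨{A, B, C}, fun x => by cases x <;> simp⟩

/-- Every prefix of `w` has at least as many `A`'s as `B`'s and at least as many `A`'s as `C`'s. -/
def IsBallot (w : List KLetter) : Prop :=
  ∀ p, p <+: w → p.count B ≤ p.count A ∧ p.count C ≤ p.count A

theorem IsBallot.count_le {w : List KLetter} (h : IsBallot w) :
    w.count B ≤ w.count A ∧ w.count C ≤ w.count A :=
  h w List.prefix_rfl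

theorem isBallot_nil : IsBallot [] := fun p hp => by simp [List.prefix_nil.mp hp]

theorem isBallot_concat {w : List KLetter} {x : KLetter} : IsBallot (w ++ [x]) ↔ IsBallot w ∧
    (w ++ [x]).count B ≤ (w ++ [x]).count A ∧ (w ++ [x]).count C ≤ (w ++ [x]).count A := by
  simp only [IsBallot, List.prefix_concat_iff, forall_eq_or_imp, and_comm]

theorem length_eq_count_add (w : List KLetter) :
    w.length = w.count A + w.count B + w.count C := by
  induction w with
  | nil => rfl
  | cons x w ih => cases x <;> simp [ih] <;> ring

theorem finite_ballotWords (n : ℕ) : {w : List KLetter | IsBallot w ∧ w.length = n}.Finite :=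
  (List.finite_length_eq KLetter n).subset fun _ => And.right

/-- The words of length `n` all of whose prefixes have at least as many `A`'s as `B`'s and at
least as many `A`'s as `C`'s. -/
noncomputable def ballotWords (n : ℕ) : Finset (List KLetter) :=
  (finite_ballotWords n).toFinset

theorem mem_ballotWords {n : ℕ} {w : List KLetter} :
    w ∈ ballotWords n ↔ IsBallot w ∧ w.length = n :=
  (finite_ballotWords n).mem_toFinset

open Classical in
theorem sum_ballotWords_succ {M : Type*} [AddCommMonoid M] (f : List KLetter → M) (n : ℕ) :
    ∑ w ∈ ballotWords (n + 1), f w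
      = ∑ w ∈ ballotWords n, ∑ x with IsBallot (w ++ [x]), f (w ++ [x]) := by
  rw [Finset.sum_sigma']
  symm
  refine Finset.sum_bij (fun y _ => y.1 ++ [y.2]) ?_ ?_ ?_ fun _ _ => rfl
  · intro y hy
    simp_all [mem_ballotWords]
  · rintro ⟨v, x⟩ - ⟨w, y⟩ - h
    obtain ⟨rfl, h⟩ := List.append_inj' h rfl
    simp_all
  · intro w hw
    obtain ⟨hw, hlen⟩ := mem_ballotWords.mp hw
    obtain ⟨v, x, rfl⟩ := w.eq_nil_or_concat'.resolve_left (by rintro rfl; simp at hlen)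
    refine ⟨⟨v, x⟩, ?_, rfl⟩
    simp_all [mem_ballotWords, isBallot_concat]

variable {M : Type*}

/-- The product of the weights `α`, `β`, `γ` of the letters `A`, `B`, `C` of `w`. -/
def weight [CommMonoid M] (α β γ : M) (w : List KLetter) : M :=
  α ^ w.count A * β ^ w.count B * γ ^ w.count C

theorem weight_eq_of_count_eq [CommMonoid M] (α β γ : M) {w : List KLetter} (hw : IsBallot w)
    (h : w.count A = w.count C) :
    weight α β γ w = (α * γ) ^ (w.count A - w.count B) * (α * β * γ) ^ w.count B := by
  obtain ⟨k, hk⟩ := Nat.exists_eq_add_of_le hw.count_le.1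
  rw [weight, ← h, hk, Nat.add_sub_cancel_left]
  simp only [mul_pow, pow_add]
  ac_rfl

open Classical in
theorem weight_mul_add [CommSemiring M] (α β γ : M) {w : List KLetter} (hw : IsBallot w) :
    weight α β γ w * (α + β + γ) = ∑ x with IsBallot (w ++ [x]), weight α β γ (w ++ [x])
      + β * (if w.count A = w.count B then weight α β γ w else 0)
      + γ * (if w.count A = w.count C then weight α β γ w else 0) := by
  have hle := hw.count_le
  have hcount (x y : KLetter) : (w ++ [x]).count y = w.count y + if x = y then 1 else 0 := by
    simp [List.count_singleton]
  have hA : IsBallot (w ++ [A]) := by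
    simp only [isBallot_concat, hw, true_and, hcount, if_true, if_false, reduceCtorEq]
    omega
  have hB : IsBallot (w ++ [B]) ↔ w.count A ≠ w.count B := by
    simp only [isBallot_concat, hw, true_and, hcount, if_true, if_false, reduceCtorEq]
    omega
  have hC : IsBallot (w ++ [C]) ↔ w.count A ≠ w.count C := by
    simp only [isBallot_concat, hw, true_and, hcount, if_true, if_false, reduceCtorEq]
    omega
  have huniv : (Finset.univ : Finset KLetter) = {A, B, C} := rfl
  have weight_concat (x : KLetter) :
      weight α β γ (w ++ [x]) = weight α β γ w * weight α β γ [x] := by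
    simp only [weight, List.count_append, pow_add]
    ring
  have weight_singleton : weight α β γ [A] = α ∧ weight α β γ [B] = β ∧ weight α β γ [C] = γ := by
    simp [weight]
  rw [Finset.sum_filter, huniv]
  simp only [weight_concat, weight_singleton, hA, hB, hC, ne_eq, ite_not, if_true,
    Finset.sum_insert, Finset.sum_singleton, Finset.mem_insert, Finset.mem_singleton, reduceCtorEq,
    or_self, not_false_eq_true]
  split_ifs <;> ring

theorem count_map_negL (w : List KLetter) (x : KLetter) :
    (w.map negL).count x = w.count (negL x) := by
  induction w with
  | nil => rfl
  | cons y w ih => cases x <;> cases y <;> simp [negL, ih]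

theorem negL_involutive : Function.Involutive negL := fun x => by cases x <;> rfl

theorem IsBallot.map_negL {w : List KLetter} (hw : IsBallot w) : IsBallot (w.map negL) := by
  intro p hp
  obtain ⟨q, hq, rfl⟩ := List.prefix_map_iff.mp hp
  simpa [count_map_negL, negL] using (hw q hq).symm

theorem sum_weight_swap [CommSemiring M] (α β γ : M) (n : ℕ) :
    ∑ w ∈ ballotWords n with w.count A = w.count B, weight α β γ w
      = ∑ w ∈ ballotWords n with w.count A = w.count C, weight α γ β w := by
  have hmem {w : List KLetter} (hw : w ∈ ballotWords n) : w.map negL ∈ ballotWords n := by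
    rw [mem_ballotWords] at hw ⊢
    exact ⟨hw.1.map_negL, by rw [List.length_map, hw.2]⟩
  have hinv (w : List KLetter) : (w.map negL).map negL = w := by
    rw [List.map_map, negL_involutive.comp_self, List.map_id]
  refine Finset.sum_nbij' (List.map negL) (List.map negL) ?_ ?_ (fun w _ => hinv w)
    (fun w _ => hinv w) fun w _ => ?_
  · intro w hw
    rw [Finset.mem_filter] at hw ⊢
    simpa [count_map_negL, negL] using ⟨hmem hw.1, hw.2⟩
  · intro w hw
    rw [Finset.mem_filter] at hw ⊢
    simpa [count_map_negL, negL] using ⟨hmem hw.1, hw.2⟩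
  · simp only [weight, count_map_negL, negL, mul_right_comm]

open Classical in
theorem sum_weight_mul_add [CommSemiring M] (α β γ : M) (n : ℕ) :
    (∑ w ∈ ballotWords n, weight α β γ w) * (α + β + γ)
      = ∑ w ∈ ballotWords (n + 1), weight α β γ w
        + β * ∑ w ∈ ballotWords n with w.count A = w.count C, weight α γ β w
        + γ * ∑ w ∈ ballotWords n with w.count A = w.count C, weight α β γ w := by
  rw [← sum_weight_swap, Finset.sum_mul, sum_ballotWords_succ, Finset.sum_filter,
    Finset.sum_filter, Finset.mul_sum, Finset.mul_sum, ← Finset.sum_add_distrib,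
    ← Finset.sum_add_distrib]
  exact Finset.sum_congr rfl fun w hw => weight_mul_add α β γ (mem_ballotWords.mp hw).1

theorem sum_weight_telescope [CommRing M] {α β γ : M} (h : α + β + γ = 1) (n : ℕ) :
    β * ∑ k ∈ Finset.range n, ∑ w ∈ ballotWords k with w.count A = w.count C, weight α γ β w
      + γ * ∑ k ∈ Finset.range n, ∑ w ∈ ballotWords k with w.count A = w.count C, weight α β γ w
      = 1 - ∑ w ∈ ballotWords n, weight α β γ w := by
  have h0 : ballotWords 0 = {[]} := by
    ext w
    simpa [mem_ballotWords] using fun h => h ▸ isBallot_nil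
  induction n with
  | zero => simp [h0, weight]
  | succ n ih =>
    have hn := sum_weight_mul_add α β γ n
    rw [h, mul_one] at hn
    rw [Finset.sum_range_succ, Finset.sum_range_succ]
    linear_combination ih - hn

/-- The generating function of the ballot words `w` with `w.count A = w.count C`, in which `w`
contributes `X 0 ^ (w.count A - w.count B) * X 1 ^ w.count B`. -/
noncomputable def boundarySeries : MvPowerSeries (Fin 2) ℚ := fun d =>
  Nat.card {w // IsBallot w ∧ w.count A = w.count C ∧ w.count A - w.count B = d 0 ∧
    w.count B = d 1}

theorem le_order_subst_boundarySeries_sub {τ : Type*} {α β γ : MvPowerSeries τ ℚ}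
    (hα : constantCoeff α = 0) (N : ℕ) :
    (N : ℕ∞) ≤ order (subst ![α * γ, α * β * γ] boundarySeries -
      ∑ k ∈ Finset.range (3 * N), ∑ w ∈ ballotWords k with w.count A = w.count C,
        weight α β γ w) := by
  let exponent (w : List KLetter) : Fin 2 →₀ ℕ :=
    Finsupp.single 0 (w.count A - w.count B) + Finsupp.single 1 (w.count B)
  have hexponent (w : List KLetter) (d : Fin 2 →₀ ℕ) :
      exponent w = d ↔ w.count A - w.count B = d 0 ∧ w.count B = d 1 := by
    simp [exponent, Finsupp.ext_iff, Fin.forall_fin_two]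
  let words := {w ∈ (Finset.range (3 * N)).biUnion ballotWords | w.count A = w.count C}
  have hmem (w : List KLetter) :
      w ∈ words ↔ (IsBallot w ∧ w.length < 3 * N) ∧ w.count A = w.count C := by
    simp [words, mem_ballotWords, and_comm]
  have hsum : ∑ k ∈ Finset.range (3 * N), ∑ w ∈ ballotWords k with w.count A = w.count C,
      weight α β γ w
        = ∑ w ∈ words, (exponent w).prod fun j k => ![α * γ, α * β * γ] j ^ k := by
    have hdisj : ((Finset.range (3 * N) : Finset ℕ) : Set ℕ).PairwiseDisjoint ballotWords :=
      fun k _ l _ hkl => Finset.disjoint_left.mpr fun w hk hl =>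
        hkl ((mem_ballotWords.mp hk).2.symm.trans (mem_ballotWords.mp hl).2)
    simp only [words, Finset.sum_filter, Finset.sum_biUnion hdisj]
    refine Finset.sum_congr rfl fun k _ => Finset.sum_congr rfl fun w hw => ?_
    split_ifs with hAC
    · rw [weight_eq_of_count_eq α β γ (mem_ballotWords.mp hw).1 hAC,
        Finsupp.prod_fintype _ _ fun _ => pow_zero _]
      simp [exponent]
    · rfl
  rw [hsum]
  refine le_order_subst_sub_sum (by simp [Fin.forall_fin_two, hα]) _ _ _ fun d hd => ?_
  refine congrArg Nat.cast (Nat.subtype_card _ fun w => ?_)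
  rw [Finset.mem_filter, hmem, hexponent]
  rw [Finsupp.degree_eq_sum, Fin.sum_univ_two] at hd
  have := length_eq_count_add w
  constructor
  · exact fun ⟨⟨⟨hw, _⟩, hAC⟩, hd⟩ => ⟨hw, hAC, hd⟩
  · exact fun ⟨hw, hAC, hd⟩ => ⟨⟨⟨hw, by have := hw.count_le; omega⟩, hAC⟩, hd⟩

theorem le_order_sum_weight {τ R : Type*} [CommRing R] {α β γ : MvPowerSeries τ R}
    (hα : constantCoeff α = 0) (N : ℕ) :
    (N : ℕ∞) ≤ order (∑ w ∈ ballotWords (3 * N), weight α β γ w) := by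
  refine nat_le_order fun d hd => ?_
  rw [map_sum]
  refine Finset.sum_eq_zero fun w hw => coeff_of_lt_order ?_
  obtain ⟨hw, hlen⟩ := mem_ballotWords.mp hw
  have hN : N ≤ w.count A := by
    have := hw.count_le
    have := length_eq_count_add w
    omega
  have hαN : (N : ℕ∞) ≤ order (α ^ w.count A) :=
    (Nat.cast_le.mpr hN).trans (le_order_pow_of_constantCoeff_eq_zero _ hα)
  rw [weight, mul_assoc]
  exact (Nat.cast_lt.mpr hd).trans_le (hαN.trans (le_self_add.trans le_order_mul))

theorem kernel_identity {τ : Type*} {α β γ : MvPowerSeries τ ℚ} (hα : constantCoeff α = 0)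
    (h : α + β + γ = 1) :
    β * subst ![α * β, α * β * γ] boundarySeries
      + γ * subst ![α * γ, α * β * γ] boundarySeries = 1 := by
  refine sub_eq_zero.mp (order_eq_top_iff.mp (ENat.eq_top_iff_forall_ge.mpr fun N => ?_))
  have h₁ := le_order_subst_boundarySeries_sub (β := γ) (γ := β) hα N
  have h₂ := le_order_subst_boundarySeries_sub (β := β) (γ := γ) hα N
  rw [mul_right_comm α γ β] at h₁
  have herror : β * subst ![α * β, α * β * γ] boundarySeries
      + γ * subst ![α * γ, α * β * γ] boundarySeries - 1
      = β * (subst ![α * β, α * β * γ] boundarySeries - ∑ k ∈ Finset.range (3 * N),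
            ∑ w ∈ ballotWords k with w.count A = w.count C, weight α γ β w)
        + (γ * (subst ![α * γ, α * β * γ] boundarySeries - ∑ k ∈ Finset.range (3 * N),
            ∑ w ∈ ballotWords k with w.count A = w.count C, weight α β γ w)
        + -1 * ∑ w ∈ ballotWords (3 * N), weight α β γ w) := by
    linear_combination sum_weight_telescope h (3 * N)
  rw [herror]
  have hmul {f g : MvPowerSeries τ ℚ} (hg : (N : ℕ∞) ≤ order g) : (N : ℕ∞) ≤ order (f * g) :=
    hg.trans (le_add_self.trans le_order_mul)
  have hadd {f g : MvPowerSeries τ ℚ} (hf : (N : ℕ∞) ≤ order f) (hg : (N : ℕ∞) ≤ order g) :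
      (N : ℕ∞) ≤ order (f + g) := (le_min hf hg).trans min_order_le_add
  exact hadd (hmul h₁) (hadd (hmul h₂) (hmul (le_order_sum_weight hα N)))

end BallotWords

section ClosedForm
open MvPowerSeries

/-- The difference of the two sides of the closed form
`(1 - p)² R(x, y) = (1 + 4u) (1 - p - 2u)` of the boundary series `R`, at the parametrization
`x = p (1 - p) / (1 + 4u)²`, `y = u / (1 + 4u)³` with `p = X 0` and `u = X 1`. -/
noncomputable def defect : MvPowerSeries (Fin 2) ℚ :=
  (1 - X 0) ^ 2 * subst ![X 0 * (1 - X 0) * ((1 + 4 * X 1)⁻¹) ^ 2, X 1 * ((1 + 4 * X 1)⁻¹) ^ 3]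
    boundarySeries - (1 + 4 * X 1) * (1 - X 0 - 2 * X 1)

theorem subst_defect {τ : Type*} {p u k : MvPowerSeries τ ℚ} (hp : constantCoeff p = 0)
    (hu : constantCoeff u = 0) (hk : (1 + 4 * u) * k = 1) :
    subst ![p, u] defect = (1 - p) ^ 2 * subst ![p * (1 - p) * k ^ 2, u * k ^ 3] boundarySeries
      - (1 + 4 * u) * (1 - p - 2 * u) := by
  have hpu : HasSubst ![p, u] := hasSubst_pair hp hu
  have hX : substAlgHom (R := ℚ) hpu (X 0) = p ∧ substAlgHom (R := ℚ) hpu (X 1) = u := by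
    simp only [substAlgHom_apply, subst_X hpu]
    exact ⟨rfl, rfl⟩
  have hinv : substAlgHom (R := ℚ) hpu (1 + 4 * X 1)⁻¹ = k := by
    have h := congrArg (substAlgHom (R := ℚ) hpu)
      (MvPowerSeries.mul_inv_cancel (1 + 4 * X 1 : MvPowerSeries (Fin 2) ℚ) (by simp))
    simp only [map_mul, map_add, map_one, map_ofNat, hX] at h
    exact left_inv_eq_right_inv ((mul_comm _ _).trans h) hk
  rw [defect, ← substAlgHom_apply hpu]
  simp only [map_sub, map_mul, map_add, map_pow, map_one, map_ofNat, hX]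
  rw [substAlgHom_apply hpu, subst_subst_pair hpu (by simp) (by simp)]
  simp only [← substAlgHom_apply hpu, map_sub, map_mul, map_pow, map_one, hX, hinv]

theorem kernel_identity_parametrized {τ : Type*} {p v b d k : MvPowerSeries τ ℚ}
    (hp : constantCoeff p = 0) (hd : (1 + v - 2 * p * v) * d = 1)
    (hb : b = p * (1 - p) * (1 - p * v) * d) (hk : (1 + 4 * (v * b)) * k = 1) :
    v * (1 - p) * (1 - p * v) ^ 2 *
        subst ![p * v * (1 - p * v) * k ^ 2, v * b * k ^ 3] boundarySeries
      + (1 - p * v) * (1 - p) ^ 2 * subst ![p * (1 - p) * k ^ 2, v * b * k ^ 3] boundarySeries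
      = (1 - p * v) * (1 - p) * (1 + v - 2 * p * v) * (1 + 4 * (v * b)) := by
  subst hb
  -- The weights make `α γ` and `α β` equal to `q (1 - q) k ^ 2` for `q = p` and `q = p v`, so that
  -- the closed form of `boundarySeries` is needed at two points with the same `u = v b`.
  obtain ⟨α, hα⟩ : ∃ α, α = p * (1 + v - 2 * p * v) * k := ⟨_, rfl⟩
  obtain ⟨β, hβ⟩ : ∃ β, β = v * (1 - p * v) * d * k := ⟨_, rfl⟩
  obtain ⟨γ, hγ⟩ : ∃ γ, γ = (1 - p) * d * k := ⟨_, rfl⟩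
  have hαβγ : α + β + γ = 1 := by
    linear_combination hα + hβ + hγ + hk - k * (p * (1 + v - 2 * p * v) - 1) * hd
  have hαβ : α * β = p * v * (1 - p * v) * k ^ 2 := by
    rw [hα, hβ]
    linear_combination p * v * (1 - p * v) * k ^ 2 * hd
  have hαγ : α * γ = p * (1 - p) * k ^ 2 := by
    rw [hα, hγ]
    linear_combination p * (1 - p) * k ^ 2 * hd
  have hprod : α * β * γ = v * (p * (1 - p) * (1 - p * v) * d) * k ^ 3 := by
    rw [hαβ, hγ]
    ring
  have hkernel := kernel_identity (by simp [hα, hp]) hαβγ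
  rw [hprod, hαβ, hαγ, hβ, hγ] at hkernel
  set Rp := subst ![p * (1 - p) * k ^ 2, _] boundarySeries
  set Rq := subst ![p * v * (1 - p * v) * k ^ 2, _] boundarySeries
  set K := 1 + 4 * (v * (p * (1 - p) * (1 - p * v) * d))
  linear_combination (1 - p * v) * (1 - p) * (1 + v - 2 * p * v) * K * hkernel
    - (v * (1 - p) * (1 - p * v) ^ 2 * Rq + (1 - p * v) * (1 - p) ^ 2 * Rp) * (K * k * hd + hk)

theorem defect_eq_zero : defect = 0 := by
  let p : MvPowerSeries (Fin 2) ℚ := X 0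
  let v : MvPowerSeries (Fin 2) ℚ := X 1
  have hp : constantCoeff p = 0 := constantCoeff_X 0
  have hv : constantCoeff v = 0 := constantCoeff_X 1
  obtain ⟨d, hd⟩ : ∃ d, (1 + v - 2 * p * v) * d = 1 :=
    ⟨_, MvPowerSeries.mul_inv_cancel _ (by simp [hp, hv])⟩
  obtain ⟨b, hb⟩ : ∃ b, b = p * (1 - p) * (1 - p * v) * d := ⟨_, rfl⟩
  obtain ⟨k, hk⟩ : ∃ k, (1 + 4 * (v * b)) * k = 1 :=
    ⟨_, MvPowerSeries.mul_inv_cancel _ (by simp [hv])⟩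
  have hunit {f : MvPowerSeries (Fin 2) ℚ} (hf : constantCoeff f ≠ 0) : f ≠ 0 := by
    rintro rfl
    exact hf (map_zero _)
  have hb0 : b ≠ 0 := by
    rw [hb]
    refine mul_ne_zero (mul_ne_zero (mul_ne_zero ?_ ?_) ?_) (right_ne_zero_of_mul_eq_one hd)
    · exact fun h => by simpa [p] using congrArg (coeff (Finsupp.single 0 1)) h
    · exact hunit (by simp [hp])
    · exact hunit (by simp [hp])
  have ha0 : subst ![X 0, (0 : MvPowerSeries (Fin 2) ℚ)] (1 - p * v) ≠ 0 := by
    have hs : HasSubst ![X 0, (0 : MvPowerSeries (Fin 2) ℚ)] := HasSubst.X_zero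
    rw [← substAlgHom_apply hs, map_sub, map_one, map_mul]
    simp [v, substAlgHom_apply, subst_X hs]
  refine eq_zero_of_functional_equation (c := 1 - p) (s := p * v) hb0 (by simp [hp]) ha0 ?_
  change (1 - p * v) * subst ![p, v * b] defect
    + v * ((1 - p) * subst ![p * v, v * b] defect) = 0
  rw [subst_defect hp (by simp [hv]) hk, subst_defect (by simp [hp]) (by simp [hv]) hk]
  have hdb : (1 + v - 2 * p * v) * b = p * (1 - p) * (1 - p * v) := by
    rw [hb]
    linear_combination p * (1 - p) * (1 - p * v) * hd
  linear_combination kernel_identity_parametrized hp hd hb hk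
    + 2 * v * (1 + 4 * (v * b)) * hdb

end ClosedForm

section KrewerasSeries
open PowerSeries

/-- A word is Kreweras if it is a Kreweras word of some length `3 * n`; then `n` is its number of
`A`'s. -/
def IsKreweras (w : List KLetter) : Prop :=
  IsBallot w ∧ w.count A = w.count B ∧ w.count A = w.count C

theorem isKrewerasWord_iff {n : ℕ} {w : List KLetter} :
    IsKrewerasWord n w ↔ IsKreweras w ∧ w.count A = n := by
  have hprefix : (∀ k, (w.take k).count B ≤ (w.take k).count A ∧
      (w.take k).count C ≤ (w.take k).count A) ↔ IsBallot w :=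
    ⟨fun h p hp => List.prefix_iff_eq_take.mp hp ▸ h p.length,
      fun h k => h _ (List.take_prefix k w)⟩
  have := length_eq_count_add w
  rw [IsKrewerasWord, hprefix, IsKreweras]
  constructor
  · rintro ⟨-, hA, hB, hC, hw⟩
    exact ⟨⟨hw, hA.trans hB.symm, hA.trans hC.symm⟩, hA⟩
  · rintro ⟨⟨hw, hB, hC⟩, hA⟩
    exact ⟨by omega, hA, hB ▸ hA, hC ▸ hA, hw⟩

theorem finite_isKreweras_count (n : ℕ) : {w | IsKreweras w ∧ w.count A = n}.Finite :=
  (List.finite_length_eq KLetter (3 * n)).subset fun _ hw => (isKrewerasWord_iff.mpr hw).1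

/-- The generating function of Kreweras words by the number of `A`'s. -/
noncomputable def krewerasSeries : PowerSeries ℚ :=
  countSeries ℚ fun w : {w // IsKreweras w} => w.1.count A

theorem krewerasSeries_eq_subst :
    krewerasSeries = MvPowerSeries.subst ![0, PowerSeries.X] boundarySeries := by
  ext n
  rw [krewerasSeries, coeff_countSeries_subtype, coeff_subst_zero_X]
  refine congrArg Nat.cast (Nat.card_congr (Equiv.subtypeEquivRight fun w => ?_))
  simp only [IsKreweras, Finsupp.single_eq_same, ne_eq, zero_ne_one, not_false_eq_true,
    Finsupp.single_eq_of_ne]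
  constructor
  · rintro ⟨⟨hw, hB, hC⟩, hA⟩
    exact ⟨hw, hC, Nat.sub_eq_zero_of_le hB.le, hB ▸ hA⟩
  · rintro ⟨hw, hC, h0, h1⟩
    have := hw.count_le
    exact ⟨⟨hw, by omega, hC⟩, by omega⟩

theorem krewerasSeries_subst {k : PowerSeries ℚ} (hk : (1 + 4 * X) * k = 1) :
    krewerasSeries.subst (X * k ^ 3) = (1 + 4 * X) * (1 - 2 * X) := by
  have hX : MvPowerSeries.constantCoeff (X : PowerSeries ℚ) = 0 := constantCoeff_X
  have hs : HasSubst (X * k ^ 3) := .of_constantCoeff_zero' (by simp)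
  have hX' : PowerSeries.subst (X * k ^ 3) (X : PowerSeries ℚ) = X * k ^ 3 := subst_X hs
  have h0 : PowerSeries.subst (X * k ^ 3) (0 : PowerSeries ℚ) = 0 :=
    subst_zero_of_hasSubst hs.const
  have hdefect := subst_defect (p := (0 : PowerSeries ℚ)) (map_zero _) hX hk
  rw [defect_eq_zero, subst_zero_of_hasSubst (hasSubst_pair (map_zero _) hX),
    zero_mul, zero_mul] at hdefect
  rw [krewerasSeries_eq_subst, PowerSeries.subst, subst_subst_pair hs.const (map_zero _) hX]
  change MvPowerSeries.subst ![PowerSeries.subst (X * k ^ 3) 0, PowerSeries.subst (X * k ^ 3) X]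
    boundarySeries = _
  rw [h0, hX']
  linear_combination -hdefect

end KrewerasSeries

section Decomposition
open PowerSeries

theorem isBallot_append {u v : List KLetter} : IsBallot (u ++ v) ↔ IsBallot u ∧ ∀ p, p <+: v →
    (u ++ p).count B ≤ (u ++ p).count A ∧ (u ++ p).count C ≤ (u ++ p).count A := by
  refine ⟨fun h => ⟨fun p hp => h p (hp.trans (List.prefix_append _ _)), fun p hp => ?_⟩, ?_⟩
  · exact h _ ((List.prefix_append_right_inj u).mpr hp)
  · rintro ⟨hu, hv⟩ p hp
    rcases List.prefix_or_prefix_of_prefix hp (List.prefix_append u v) with h | ⟨r, rfl⟩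
    · exact hu p h
    · exact hv r ((List.prefix_append_right_inj u).mp hp)

theorem isKreweras_nil : IsKreweras [] := ⟨isBallot_nil, rfl, rfl⟩

theorem isKreweras_insert {u : List KLetter} (hu : IsKreweras u) (p q : List KLetter) :
    IsKreweras (p ++ (u ++ q)) ↔ IsKreweras (p ++ q) := by
  obtain ⟨hu, hB, hC⟩ := hu
  simp only [IsKreweras, ← List.append_assoc, isBallot_append, List.count_append]
  constructor
  · rintro ⟨⟨⟨hp, -⟩, h⟩, h'⟩
    exact ⟨⟨hp, fun r hr => by have := h r hr; omega⟩, by omega⟩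
  · rintro ⟨⟨hp, h⟩, h'⟩
    exact ⟨⟨⟨hp, fun r hr => by have := hp.count_le; have := hu r hr; omega⟩,
      fun r hr => by have := h r hr; omega⟩, by omega⟩

theorem isKreweras_append_left_iff {u : List KLetter} (hu : IsKreweras u) {v : List KLetter} :
    IsKreweras (u ++ v) ↔ IsKreweras v :=
  isKreweras_insert hu [] v

theorem IsKreweras.right_of_prefix {p q v : List KLetter} (hpq : IsKreweras (p ++ q))
    (hv : IsKreweras v) (hq : q <+: v) : IsKreweras q := by
  obtain ⟨r, rfl⟩ := hq
  have hq := (isBallot_append.mp hv.1).1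
  have hp := (isBallot_append.mp hpq.1).1.count_le
  have hq' := hq.count_le
  obtain ⟨-, hB, hC⟩ := hpq
  simp only [List.count_append] at hB hC
  exact ⟨hq, by omega, by omega⟩

theorem count_A_eq_zero_iff {w : List KLetter} (hw : IsBallot w) : w.count A = 0 ↔ w = [] := by
  have := hw.count_le
  have := length_eq_count_add w
  rw [← List.length_eq_zero_iff]
  omega

/-- The word obtained from a word by inserting a Kreweras word after each letter. -/
def flat (l : List (KLetter × {w // IsKreweras w})) : List KLetter :=
  l.flatMap fun x => x.1 :: x.2.1

theorem flat_cons (x : KLetter × {w // IsKreweras w}) (l : List (KLetter × {w // IsKreweras w})) :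
    flat (x :: l) = x.1 :: (x.2.1 ++ flat l) :=
  List.flatMap_cons

theorem flat_append (l m : List (KLetter × {w // IsKreweras w})) :
    flat (l ++ m) = flat l ++ flat m :=
  List.flatMap_append

theorem flat_eq_nil {l : List (KLetter × {w // IsKreweras w})} : flat l = [] ↔ l = [] := by
  cases l <;> simp [flat]

theorem isKreweras_flat (l : List (KLetter × {w // IsKreweras w})) :
    IsKreweras (flat l) ↔ IsKreweras (l.map Prod.fst) := by
  suffices ∀ p, IsKreweras (p ++ flat l) ↔ IsKreweras (p ++ l.map Prod.fst) from this []
  induction l with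
  | nil => simp [flat]
  | cons x l ih =>
    intro p
    have h := isKreweras_insert x.2.2 (p ++ [x.1]) (flat l)
    rw [ih (p ++ [x.1])] at h
    simpa [flat_cons] using h

theorem count_A_flat (l : List (KLetter × {w // IsKreweras w})) : (flat l).count A
    = (l.map Prod.fst).count A + ((l.map Prod.snd).map fun w => w.1.count A).sum := by
  induction l with
  | nil => rfl
  | cons x l ih =>
    simp only [flat_cons, List.count_cons, List.count_append, ih, List.map_cons, List.sum_cons]
    ring

theorem exists_concat_of_prefix_flat {l : List (KLetter × {w // IsKreweras w})} {p : List KLetter}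
    (hp : p <+: flat l) (hne : p ≠ []) :
    ∃ m x q, m ++ [x] <+: l ∧ p = flat m ++ x.1 :: q ∧ q <+: x.2.1 := by
  induction l generalizing p with
  | nil => exact absurd (List.prefix_nil.mp hp) hne
  | cons x l ih =>
    obtain ⟨a, p, rfl⟩ := List.exists_cons_of_ne_nil hne
    rw [flat_cons, List.cons_prefix_cons] at hp
    obtain ⟨rfl, hp⟩ := hp
    rcases List.prefix_or_prefix_of_prefix hp (List.prefix_append x.2.1 (flat l)) with h | ⟨r, rfl⟩
    · exact ⟨[], x, p, by simp, rfl, h⟩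
    · rcases eq_or_ne r [] with rfl | hr
      · exact ⟨[], x, x.2.1, by simp, by simp [flat], List.prefix_rfl⟩
      · obtain ⟨m, y, q, hm, rfl, hq⟩ := ih ((List.prefix_append_right_inj _).mp hp) hr
        exact ⟨x :: m, y, q, by simpa using hm, by simp [flat_cons], hq⟩

/-- The inserted Kreweras words are as long as possible: none of them can be prolonged by a
nonempty Kreweras word. -/
def Saturated (l : List (KLetter × {w // IsKreweras w})) : Prop :=
  ∀ x m, x :: m <:+ l → ∀ p, p <+: flat m → IsKreweras p → p = []

theorem saturated_cons {x : KLetter × {w // IsKreweras w}}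
    {l : List (KLetter × {w // IsKreweras w})} :
    Saturated (x :: l) ↔ (∀ p, p <+: flat l → IsKreweras p → p = []) ∧ Saturated l := by
  simp only [Saturated, List.suffix_cons_iff]
  constructor
  · exact fun h => ⟨h x l (.inl rfl), fun y m hm => h y m (.inr hm)⟩
  · rintro ⟨h, hl⟩ y m (hm | hm)
    · obtain ⟨rfl, rfl⟩ := List.cons.inj hm
      exact h
    · exact hl y m hm

theorem exists_longest_kreweras_prefix (w : List KLetter) :
    ∃ u v, IsKreweras u ∧ u ++ v = w ∧ ∀ p, p <+: v → IsKreweras p → p = [] := by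
  induction hn : w.length using Nat.strong_induction_on generalizing w with
  | _ n ih =>
    by_cases h : ∀ p, p <+: w → IsKreweras p → p = []
    · exact ⟨[], w, isKreweras_nil, rfl, h⟩
    · push Not at h
      obtain ⟨p, ⟨w', rfl⟩, hp, hne⟩ := h
      have := List.length_pos_iff.mpr hne
      rw [List.length_append] at hn
      obtain ⟨u, v, hu, rfl, hv⟩ := ih w'.length (by omega) w' rfl
      exact ⟨p ++ u, v, (isKreweras_append_left_iff hp).mpr hu, by simp, hv⟩

theorem exists_saturated_flat_eq (w : List KLetter) : ∃ l, Saturated l ∧ flat l = w := by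
  induction hn : w.length using Nat.strong_induction_on generalizing w with
  | _ n ih =>
    cases w with
    | nil => exact ⟨[], by simp [Saturated], rfl⟩
    | cons a w =>
      obtain ⟨u, v, hu, rfl, hv⟩ := exists_longest_kreweras_prefix w
      simp only [List.length_cons, List.length_append] at hn
      obtain ⟨l, hl, rfl⟩ := ih v.length (by omega) v rfl
      exact ⟨(a, ⟨u, hu⟩) :: l, saturated_cons.mpr ⟨hv, hl⟩, flat_cons _ _⟩

theorem Saturated.flat_injective {l l' : List (KLetter × {w // IsKreweras w})}
    (hl : Saturated l) (hl' : Saturated l') (h : flat l = flat l') : l = l' := by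
  induction l generalizing l' with
  | nil => exact (flat_eq_nil.mp h.symm).symm
  | cons x l ih =>
    cases l' with
    | nil => exact flat_eq_nil.mp h
    | cons x' l' =>
      rw [flat_cons, flat_cons, List.cons.injEq] at h
      obtain ⟨hl, htl⟩ := saturated_cons.mp hl
      obtain ⟨hl', htl'⟩ := saturated_cons.mp hl'
      have hx : x.2.1 = x'.2.1 := by
        rcases List.append_eq_append_iff.mp h.2 with ⟨p, hp, hpl⟩ | ⟨p, hp, hpl⟩
        · have := hl p ⟨_, hpl.symm⟩ ((isKreweras_append_left_iff x.2.2).mp (hp ▸ x'.2.2))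
          simp [hp, this]
        · have := hl' p ⟨_, hpl.symm⟩ ((isKreweras_append_left_iff x'.2.2).mp (hp ▸ x.2.2))
          simp [hp, this]
      have htail := ih htl htl' (List.append_cancel_left (hx ▸ h.2))
      rw [htail, Prod.ext h.1 (Subtype.ext hx)]

/-- A nonempty Kreweras word none of whose other nonempty factors is Kreweras. -/
def IsConnected (w : List KLetter) : Prop :=
  IsKreweras w ∧ w ≠ [] ∧ ∀ u, u <:+: w → u ≠ [] → u ≠ w → ¬ IsKreweras u

theorem connectedKrewerasWord_iff {n : ℕ} (hn : n ≠ 0) {w : List KLetter} :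
    ConnectedKrewerasWord n w ↔ IsConnected w ∧ w.count A = n := by
  simp only [ConnectedKrewerasWord, IsConnected, isKrewerasWord_iff]
  grind

theorem IsConnected.saturated {l : List (KLetter × {w // IsKreweras w})}
    (h : IsConnected (l.map Prod.fst)) : Saturated l := by
  rintro x m ⟨l₁, rfl⟩ p hp hpK
  by_contra hne
  obtain ⟨m', y, q, ⟨m'', rfl⟩, rfl, hq⟩ := exists_concat_of_prefix_flat hp hne
  have hqK : IsKreweras q := by
    rw [List.append_cons] at hpK
    exact hpK.right_of_prefix y.2.2 hq
  have hu : IsKreweras (m'.map Prod.fst ++ [y.1]) := by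
    have := (isKreweras_flat (m' ++ [(y.1, ⟨q, hqK⟩)])).mp (by simpa [flat] using hpK)
    simpa using this
  refine h.2.2 (m'.map Prod.fst ++ [y.1]) ⟨l₁.map Prod.fst ++ [x.1], m''.map Prod.fst, by simp⟩
    (by simp) (fun heq => ?_) hu
  have := congrArg List.length heq
  simp only [List.length_append, List.length_map, List.length_cons, List.length_nil] at this
  omega

theorem Saturated.isConnected {l : List (KLetter × {w // IsKreweras w})} (hl : Saturated l)
    (hK : IsKreweras (l.map Prod.fst)) (hne : l ≠ []) : IsConnected (l.map Prod.fst) := by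
  refine ⟨hK, by simpa using hne, ?_⟩
  rintro u ⟨s₁, s₂, h⟩ hu hul huK
  obtain ⟨l', l₂, rfl, h', rfl⟩ := List.map_eq_append_iff.mp h.symm
  obtain ⟨l₁, m, rfl, rfl, rfl⟩ := List.map_eq_append_iff.mp h'
  have hm : m ≠ [] := by simpa using hu
  rcases l₁.eq_nil_or_concat' with rfl | ⟨l₁, x, rfl⟩
  · obtain ⟨m, x, rfl⟩ := m.eq_nil_or_concat'.resolve_left hm
    have h₂ : IsKreweras (l₂.map Prod.fst) :=
      (isKreweras_append_left_iff huK).mp (by simpa using hK)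
    have := hl x l₂ ⟨m, by simp⟩ _ List.prefix_rfl ((isKreweras_flat l₂).mpr h₂)
    simp [flat_eq_nil.mp this] at hul
  · have := hl x (m ++ l₂) ⟨l₁, by simp⟩ (flat m) (by simp [flat_append])
      ((isKreweras_flat m).mpr huK)
    exact hm (flat_eq_nil.mp this)

theorem IsKreweras.length_eq {w : List KLetter} (hw : IsKreweras w) :
    w.length = 3 * w.count A := by
  have := length_eq_count_add w
  have := hw.2
  omega

/-- The nonempty Kreweras word obtained by inserting a Kreweras word after each letter of a
connected one. -/
def insertWords (x : {x : {w // IsConnected w} × List {w // IsKreweras w} //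
    x.2.length = 3 * x.1.1.count A}) : {w // IsKreweras w ∧ w ≠ []} :=
  ⟨flat (x.1.1.1.zip x.1.2), by
    obtain ⟨⟨⟨w, hw⟩, ws⟩, hlen⟩ := x
    have hfst : (w.zip ws).map Prod.fst = w := List.map_fst_zip (hw.1.length_eq.trans hlen.symm).le
    rw [isKreweras_flat, Ne, flat_eq_nil, ← List.map_eq_nil_iff (f := Prod.fst), hfst]
    exact ⟨hw.1, hw.2.1⟩⟩

theorem insertWords_bijective : Function.Bijective insertWords := by
  constructor
  · rintro ⟨⟨⟨w, hw⟩, ws⟩, hlen⟩ ⟨⟨⟨w', hw'⟩, ws'⟩, hlen'⟩ h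
    have hl : w.length = ws.length := hw.1.length_eq.trans hlen.symm
    have hl' : w'.length = ws'.length := hw'.1.length_eq.trans hlen'.symm
    have hfst := List.map_fst_zip hl.le
    have hfst' := List.map_fst_zip hl'.le
    have hzip : w.zip ws = w'.zip ws' := Saturated.flat_injective
      (IsConnected.saturated (hfst.symm ▸ hw)) (IsConnected.saturated (hfst'.symm ▸ hw'))
      (congrArg Subtype.val h)
    obtain rfl : w = w' := by rw [← hfst, hzip, hfst']
    obtain rfl : ws = ws' := by
      rw [← List.map_snd_zip hl.ge, hzip, List.map_snd_zip hl'.ge]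
    rfl
  · rintro ⟨w, hw, hne⟩
    obtain ⟨l, hl, rfl⟩ := exists_saturated_flat_eq w
    have hconn := hl.isConnected ((isKreweras_flat l).mp hw) (flat_eq_nil.not.mp hne)
    refine ⟨⟨(⟨l.map Prod.fst, hconn⟩, l.map Prod.snd), ?_⟩, Subtype.ext ?_⟩
    · simpa using hconn.1.length_eq
    · exact congrArg flat (List.zip_of_prod rfl rfl).symm

theorem count_A_insertWords (x : {x : {w // IsConnected w} × List {w // IsKreweras w} //
    x.2.length = 3 * x.1.1.count A}) : (insertWords x).1.count A
      = x.1.1.1.count A + (x.1.2.map fun w => w.1.count A).sum := by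
  have hl := x.1.1.2.1.length_eq.trans x.2.symm
  rw [insertWords, count_A_flat, List.map_fst_zip hl.le, List.map_snd_zip hl.ge]

/-- The generating function of connected Kreweras words by the number of `A`'s. -/
noncomputable def connectedSeries : PowerSeries ℚ :=
  countSeries ℚ fun w : {w // IsConnected w} => w.1.count A

theorem krewerasSeries_eq_one_add_countSeries :
    krewerasSeries = 1 + countSeries ℚ fun w : {w // IsKreweras w ∧ w ≠ []} => w.1.count A := by
  ext n
  rw [krewerasSeries, map_add, coeff_one, coeff_countSeries_subtype, coeff_countSeries_subtype]
  have hzero {w : List KLetter} (hw : IsKreweras w) := count_A_eq_zero_iff hw.1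
  split_ifs with hn
  · subst hn
    have : IsEmpty {w : List KLetter // (IsKreweras w ∧ w ≠ []) ∧ w.count A = 0} :=
      ⟨fun w => w.2.1.2 ((hzero w.2.1.1).mp w.2.2)⟩
    have : Subsingleton {w : List KLetter // IsKreweras w ∧ w.count A = 0} :=
      ⟨fun w w' => Subtype.ext (((hzero w.2.1).mp w.2.2).trans ((hzero w'.2.1).mp w'.2.2).symm)⟩
    have hone : Nat.card {w : List KLetter // IsKreweras w ∧ w.count A = 0} = 1 :=
      Nat.card_eq_one_iff_unique.mpr ⟨this, ⟨[], isKreweras_nil, rfl⟩⟩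
    rw [hone, Nat.card_of_isEmpty, Nat.cast_zero, add_zero, Nat.cast_one]
  · rw [zero_add]
    refine congrArg Nat.cast (Nat.card_congr (Equiv.subtypeEquivRight fun w => ?_))
    constructor
    · rintro ⟨hw, rfl⟩
      exact ⟨⟨hw, fun h => hn ((hzero hw).mpr h)⟩, rfl⟩
    · exact fun h => ⟨h.1.1, h.2⟩

theorem finite_count_A_fiber {P : List KLetter → Prop} (hP : ∀ w, P w → IsKreweras w) (n : ℕ) :
    Finite {w : {w // P w} // w.1.count A = n} :=
  have := (finite_isKreweras_count n).to_subtype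
  Finite.of_injective (fun w => (⟨w.1.1, hP _ w.1.2, w.2⟩ : {w | IsKreweras w ∧ w.count A = n}))
    fun _ _ h => Subtype.ext (Subtype.ext (Subtype.mk.inj h))

theorem krewerasSeries_eq_one_add_subst :
    krewerasSeries = 1 + connectedSeries.subst (X * krewerasSeries ^ 3) := by
  conv_rhs => rw [krewerasSeries, connectedSeries, ← countSeries_comp
    (finite_count_A_fiber fun _ hw => hw.1) (finite_count_A_fiber fun _ hw => hw)]
  rw [krewerasSeries_eq_one_add_countSeries,
    countSeries_congr (size' := fun w => w.1.count A) (.ofBijective _ insertWords_bijective)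
      count_A_insertWords]

end Decomposition

section Coefficients
open PowerSeries

theorem connectedSeries_subst :
    connectedSeries.subst (X * (1 - 2 * X) ^ 3 : PowerSeries ℚ) = 2 * X - 8 * X ^ 2 := by
  obtain ⟨k, hk⟩ : ∃ k : PowerSeries ℚ, (1 + 4 * X) * k = 1 :=
    ⟨_, PowerSeries.mul_inv_cancel _ (by simp)⟩
  have hK := krewerasSeries_subst hk
  have hs : HasSubst (X * k ^ 3) := .of_constantCoeff_zero' (by simp)
  have hs' : HasSubst (X * krewerasSeries ^ 3) := .of_constantCoeff_zero' (by simp)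
  have hinner : (X * krewerasSeries ^ 3).subst (X * k ^ 3) = X * (1 - 2 * X) ^ 3 := by
    rw [subst_mul hs, subst_X hs, subst_pow hs, hK]
    linear_combination X * (1 - 2 * X) ^ 3 *
      (1 + (1 + 4 * X) * k + ((1 + 4 * X) * k) ^ 2) * hk
  have hone : (1 : PowerSeries ℚ).subst (X * k ^ 3) = 1 := by
    rw [← coe_substAlgHom hs, map_one]
  rw [krewerasSeries_eq_one_add_subst, subst_add hs, hone, subst_comp_subst_apply hs' hs,
    hinner] at hK
  linear_combination hK

theorem succ_mul_coeff_connectedSeries (n : ℕ) :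
    (n + 1) * coeff (n + 1) connectedSeries
      = 2 ^ n * (8 * (n + (3 * n + 1)).choose (3 * n + 1)
          - 6 * (n + (3 * n + 2)).choose (3 * n + 2)) := by
  obtain ⟨ψ, hψ⟩ : ∃ ψ : PowerSeries ℚ, (1 - PowerSeries.C 2 * X) * ψ = 1 :=
    ⟨_, PowerSeries.mul_inv_cancel _ (by simp)⟩
  have hC : PowerSeries.C (2 : ℚ) = 2 := map_ofNat _ 2
  have hlagrange := succ_mul_coeff_eq_of_subst_eq (φ := (1 - 2 * X) ^ 3) (ψ := ψ ^ 3)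
    (by rw [← mul_pow, ← hC, hψ, one_pow]) connectedSeries_subst n
  have hderiv : d⁄dX ℚ (2 * X - 8 * X ^ 2 : PowerSeries ℚ) = 2 - 16 * X := by
    have h2 : d⁄dX ℚ (2 : PowerSeries ℚ) = 0 := Derivation.map_natCast _ 2
    have h8 : d⁄dX ℚ (8 : PowerSeries ℚ) = 0 := Derivation.map_natCast _ 8
    simp only [map_sub, Derivation.leibniz, derivative_pow, derivative_X, h2, h8, smul_eq_mul]
    push_cast
    ring
  have hsplit : (2 - 16 * X) * (ψ ^ 3) ^ (n + 1)
      = PowerSeries.C 8 * ψ ^ (3 * n + 1 + 1) - PowerSeries.C 6 * ψ ^ (3 * n + 2 + 1) := by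
    rw [map_ofNat, map_ofNat]
    rw [hC] at hψ
    linear_combination 8 * ψ ^ (3 * n + 2) * hψ
  rw [hlagrange, hderiv, hsplit, map_sub, coeff_C_mul, coeff_C_mul,
    coeff_pow_of_one_sub_mul_eq_one hψ, coeff_pow_of_one_sub_mul_eq_one hψ]
  ring

theorem coeff_connectedSeries_mul (n : ℕ) :
    coeff (n + 1) connectedSeries * ((3 * n + 2).factorial * (n + 1).factorial)
      = 2 ^ (n + 2) * (4 * n + 1).factorial := by
  have h₁ : ((n + (3 * n + 1)).choose (3 * n + 1) * n.factorial * (3 * n + 1).factorial : ℚ)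
      = (4 * n + 1).factorial := by
    exact_mod_cast (Nat.add_choose_mul_factorial_mul_factorial n (3 * n + 1)).trans
      (congrArg Nat.factorial (by ring))
  have h₂ : ((n + (3 * n + 2)).choose (3 * n + 2) * n.factorial * (3 * n + 2).factorial : ℚ)
      = (4 * n + 2) * (4 * n + 1).factorial := by
    exact_mod_cast (Nat.add_choose_mul_factorial_mul_factorial n (3 * n + 2)).trans
      (by rw [show n + (3 * n + 2) = 4 * n + 1 + 1 by ring, Nat.factorial_succ])
  have hfac : ((3 * n + 2).factorial : ℚ) = (3 * n + 2) * (3 * n + 1).factorial := by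
    exact_mod_cast Nat.factorial_succ (3 * n + 1)
  have hfac' : ((n + 1).factorial : ℚ) = (n + 1) * n.factorial := by
    exact_mod_cast Nat.factorial_succ n
  rw [hfac']
  linear_combination ((3 * n + 2).factorial * n.factorial : ℚ) * succ_mul_coeff_connectedSeries n
    + 2 ^ n * 8 * (3 * n + 2) * h₁ - 2 ^ n * 6 * h₂
    + 2 ^ n * 8 * (n + (3 * n + 1)).choose (3 * n + 1) * n.factorial * hfac

theorem card_connectedKrewerasWord {n : ℕ} (hn : n ≠ 0) :
    (Nat.card {w // ConnectedKrewerasWord n w} : ℚ) = coeff n connectedSeries := by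
  simp only [connectedSeries, coeff_countSeries_subtype, connectedKrewerasWord_iff hn]

end Coefficients

end Kreweras

/-- The number of connected Kreweras words of length `3n` equals
`2^(n+1) * (4n-3)! / ((3n-1)! * n!)`, stated multiplicatively. -/
theorem connected_kreweras_count (n : ℕ) (hn : 1 ≤ n) :
    Nat.card {w : List KLetter // ConnectedKrewerasWord n w} *
        ((3 * n - 1).factorial * n.factorial)
      = 2 ^ (n + 1) * (4 * n - 3).factorial := by
  obtain ⟨m, rfl⟩ := Nat.exists_eq_add_of_le' hn
  have h := Kreweras.coeff_connectedSeries_mul m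
  rw [← Kreweras.card_connectedKrewerasWord m.succ_ne_zero] at h
  exact_mod_cast h
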